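/- (Recurrence relation for 2D q-Bernoulli polynomials.) For every n ≥ 1 the following identity of polynomials in x, y holds: [n]_q · B_{n,q}(qx,y) = [n]_q q^{n} x · B_{n−1,q}(x,y) + Σ_{k=1}^{n} [n choose k]_q q^{n−k} (α_k^B + [k]_q β_{k−1}^B y) B_{n−k,q}(x,y), where B_{n,q}(qx,y) denotes the polynomial obtained from B_{n,q}(x,y) by substituting qx for x. -/

import Mathlib

noncomputable section

open Finset MvPolynomial

/-- The `q`-integer `[n]_q = 1 + q + ⋯ + q^(n-1)`. -/
def qInt {K : Type*} [Field K] (q : K) (n : ℕ) : K := ∑ i ∈ Finset.range n, q ^ i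

/-- The `q`-factorial `[n]_q! = [1]_q [2]_q ⋯ [n]_q`. -/
def qFact {K : Type*} [Field K] (q : K) (n : ℕ) : K := ∏ k ∈ Finset.range n, qInt q (k + 1)

/-- The `q`-binomial coefficient `[n choose k]_q`. -/
def qChoose {K : Type*} [Field K] (q : K) (n k : ℕ) : K :=
  qFact q n / (qFact q k * qFact q (n - k))

/-- The partial `q`-derivative in the variable `v` (v = 0 is `x`, v = 1 is `y`),
the linear operator determined by `D_{q,x}(x^m y^l) = [m]_q x^(m-1) y^l` and
`D_{q,y}(x^m y^l) = [l]_q x^m y^(l-1)`. -/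
def qDeriv {K : Type*} [Field K] (q : K) (v : Fin 2) (P : MvPolynomial (Fin 2) K) :
    MvPolynomial (Fin 2) K :=
  ∑ m ∈ P.support, monomial (m - Finsupp.single v 1) (P.coeff m * qInt q (m v))

/-- Substitution `x ↦ c·x` in a polynomial in the two variables `x = X 0`, `y = X 1`. -/
def substX {K : Type*} [Field K] (c : K) (P : MvPolynomial (Fin 2) K) :
    MvPolynomial (Fin 2) K :=
  aeval (fun i : Fin 2 => if i = 0 then C c * X 0 else X 1) P

/-- Substitution `y ↦ c·y` in a polynomial in the two variables `x = X 0`, `y = X 1`. -/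
def substY {K : Type*} [Field K] (c : K) (P : MvPolynomial (Fin 2) K) :
    MvPolynomial (Fin 2) K :=
  aeval (fun i : Fin 2 => if i = 0 then X 0 else C c * X 1) P

/-- The 2D `q`-Appell polynomials attached to a coefficient sequence `a`:
`A_{n,q}(x,y) = Σ_{i+j+k=n} ([n]_q!/([i]_q![j]_q![k]_q!)) a_i q^(k(k-1)/2) x^j y^k`. -/
def appell {K : Type*} [Field K] (q : K) (a : ℕ → K) (n : ℕ) : MvPolynomial (Fin 2) K :=
  ∑ i ∈ Finset.range (n + 1), ∑ j ∈ Finset.range (n + 1 - i),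
    monomial (Finsupp.single (0 : Fin 2) j + Finsupp.single (1 : Fin 2) (n - i - j))
      (qFact q n / (qFact q i * qFact q j * qFact q (n - i - j)) * a i *
        q ^ ((n - i - j) * (n - i - j - 1) / 2))

/-!
Let `A(t) = ∑ a_n t ^ n / [n]_q!`. The polynomials `A_{n,q}(x, y)` have the `q`-exponential
generating function `F(t) = A(t) e_q(xt) E_q(yt)`, and the substitution `x ↦ qx` replaces
`e_q(xt)` by `e_q(qxt)`. The `q`-Euler operator `θ = t D_q` satisfies the Leibniz rule
`θ(fg) = θ(f) g + f(qt) θ(g)` and `θ e_q(xt) = xt e_q(xt)`, `θ E_q(yt) = yt E_q(qyt)`. Hence, if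
`θ A = α(t) A(qt)` and `A = β(t) A(qt)`, then
`θ (A(t) e_q(qxt) E_q(yt)) = (α(t) + yt β(t) + qxt) F(qt)`,
and comparing coefficients gives a recurrence for every such 2D `q`-Appell sequence.

In the Bernoulli case `A(t) (e_q(t) - 1) = t`. Applying `θ` and `t ↦ qt` to this identity gives
`q α = 1 - A(t) e_q(t)` and `q β = 1 + (q - 1) A(t) e_q(t)`. Working with `θ` rather than with the
difference `f(qt) - f(t) = (q - 1) θ f` avoids dividing by `q - 1`.
-/

section QNumbers

variable {K : Type*} [Field K] {q : K}

lemma qInt_zero (q : K) : qInt q 0 = 0 := by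
  simp [qInt]

lemma qInt_one (q : K) : qInt q 1 = 1 := by
  simp [qInt]

lemma qInt_add (q : K) (m n : ℕ) : qInt q (m + n) = qInt q m + q ^ m * qInt q n := by
  simp only [qInt, sum_range_add, pow_add, mul_sum]

lemma sub_one_mul_qInt (q : K) (n : ℕ) : (q - 1) * qInt q n = q ^ n - 1 :=
  mul_geom_sum q n

lemma qFact_zero (q : K) : qFact q 0 = 1 := by
  simp [qFact]

lemma qFact_succ (q : K) (n : ℕ) : qFact q (n + 1) = qFact q n * qInt q (n + 1) := by
  simp [qFact, prod_range_succ]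

lemma qFact_ne_zero (hq : ∀ n : ℕ, 1 ≤ n → qInt q n ≠ 0) (n : ℕ) : qFact q n ≠ 0 :=
  prod_ne_zero_iff.2 fun k _ => hq (k + 1) k.succ_pos

lemma qInt_mul_inv_qFact_succ (hq : ∀ n : ℕ, 1 ≤ n → qInt q n ≠ 0) (n : ℕ) :
    qInt q (n + 1) * (qFact q (n + 1))⁻¹ = (qFact q n)⁻¹ := by
  rw [qFact_succ, mul_inv_rev, mul_inv_cancel_left₀ (hq _ n.succ_pos)]

lemma qChoose_self (hq : ∀ n : ℕ, 1 ≤ n → qInt q n ≠ 0) (n : ℕ) : qChoose q n n = 1 := by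
  simp [qChoose, qFact_zero, qFact_ne_zero hq n]

lemma inv_qFact_mul_qChoose (hq : ∀ n : ℕ, 1 ≤ n → qInt q n ≠ 0) (n k : ℕ) :
    (qFact q n)⁻¹ * qChoose q n k = (qFact q k)⁻¹ * (qFact q (n - k))⁻¹ := by
  rw [qChoose, div_eq_mul_inv, inv_mul_cancel_left₀ (qFact_ne_zero hq n), mul_inv]

lemma qChoose_mul_qChoose (hq : ∀ n : ℕ, 1 ≤ n → qInt q n ≠ 0) (n i j : ℕ) :
    qChoose q n i * qChoose q (n - i) j =
      qFact q n / (qFact q i * qFact q j * qFact q (n - i - j)) := by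
  have := qFact_ne_zero hq (n - i)
  simp only [qChoose]
  field_simp

end QNumbers

section QCalculus

variable {K R : Type*} [Field K] [CommRing R] [Algebra K R]

/-- The `q`-dilation `f(t) ↦ f(qt)` of power series. -/
abbrev qDilation (q : K) : PowerSeries R →+* PowerSeries R :=
  PowerSeries.rescale (algebraMap K R q)

/-- The `q`-Euler operator `t D_q`, determined by `t ^ n ↦ [n]_q t ^ n`. Unlike the difference
quotient `(f(qt) - f(t)) / (q - 1)`, this description also covers `q = 1`. -/
def qEuler (q : K) : PowerSeries R →ₗ[K] PowerSeries R where
  toFun f := PowerSeries.mk fun n => qInt q n • PowerSeries.coeff n f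
  map_add' f g := by ext n; simp
  map_smul' c f := by ext n; simp [smul_comm c]

@[simp]
lemma coeff_qEuler (q : K) (f : PowerSeries R) (n : ℕ) :
    PowerSeries.coeff n (qEuler q f) = qInt q n • PowerSeries.coeff n f := by
  simp [qEuler]

lemma coeff_qDilation (q : K) (f : PowerSeries R) (n : ℕ) :
    PowerSeries.coeff n (qDilation q f) = q ^ n • PowerSeries.coeff n f := by
  rw [PowerSeries.coeff_rescale, ← map_pow, Algebra.smul_def]

lemma qDilation_eq_add_qEuler (q : K) (f : PowerSeries R) :
    qDilation q f = f + (q - 1) • qEuler q f := by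
  ext n
  rw [coeff_qDilation, map_add, PowerSeries.coeff_smul, coeff_qEuler, smul_smul,
    sub_one_mul_qInt, sub_smul, one_smul, add_sub_cancel]

lemma qEuler_mul (q : K) (f g : PowerSeries R) :
    qEuler q (f * g) = qEuler q f * g + qDilation q f * qEuler q g := by
  ext n
  simp only [coeff_qEuler, map_add, PowerSeries.coeff_mul, smul_sum, ← sum_add_distrib,
    coeff_qDilation]
  refine sum_congr rfl fun p hp => ?_
  rw [← mem_antidiagonal.1 hp, qInt_add, add_smul, smul_mul_assoc, smul_mul_smul_comm]

lemma qEuler_one (q : K) : qEuler q (1 : PowerSeries R) = 0 := by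
  ext n
  cases n <;> simp [qInt_zero, PowerSeries.coeff_one]

lemma qEuler_X (q : K) : qEuler q (PowerSeries.X : PowerSeries R) = PowerSeries.X := by
  ext n
  rw [coeff_qEuler, PowerSeries.coeff_X]
  split_ifs with hn <;> simp [hn, qInt_one]

lemma map_qEuler (q : K) (f : PowerSeries K) :
    PowerSeries.map (algebraMap K R) (qEuler q f) =
      qEuler q (PowerSeries.map (algebraMap K R) f) := by
  ext n
  simp [Algebra.smul_def]

lemma map_qDilation (q : K) (f : PowerSeries K) :
    PowerSeries.map (algebraMap K R) (qDilation q f) =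
      qDilation q (PowerSeries.map (algebraMap K R) f) :=
  (PowerSeries.rescale_map _ _ _).symm

/-- The `q`-exponential generating function `∑ f n t ^ n / [n]_q!` of a sequence. -/
def qGenFun (q : K) (f : ℕ → R) : PowerSeries R :=
  PowerSeries.mk fun n => (qFact q n)⁻¹ • f n

@[simp]
lemma coeff_qGenFun (q : K) (f : ℕ → R) (n : ℕ) :
    PowerSeries.coeff n (qGenFun q f) = (qFact q n)⁻¹ • f n :=
  PowerSeries.coeff_mk _ _

@[simp]
lemma constantCoeff_qGenFun (q : K) (f : ℕ → R) :
    PowerSeries.constantCoeff (qGenFun q f) = f 0 := by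
  rw [← PowerSeries.coeff_zero_eq_constantCoeff_apply, coeff_qGenFun, qFact_zero, inv_one,
    one_smul]

lemma map_qGenFun (q : K) (f : ℕ → K) :
    PowerSeries.map (algebraMap K R) (qGenFun q f) = qGenFun q fun n => algebraMap K R (f n) := by
  ext n
  simp [Algebra.smul_def]

lemma qEuler_qGenFun (q : K) (f : ℕ → R) :
    qEuler q (qGenFun q f) = qGenFun q fun n => qInt q n • f n := by
  ext n
  rw [coeff_qEuler, coeff_qGenFun, coeff_qGenFun, smul_comm]

lemma qDilation_qGenFun (q : K) (f : ℕ → R) :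
    qDilation q (qGenFun q f) = qGenFun q fun n => q ^ n • f n := by
  ext n
  rw [coeff_qDilation, coeff_qGenFun, coeff_qGenFun, smul_comm]

lemma qGenFun_add (q : K) (f g : ℕ → R) :
    qGenFun q (fun n => f n + g n) = qGenFun q f + qGenFun q g := by
  ext n
  simp

lemma smul_qGenFun (q : K) (r : R) (f : ℕ → R) :
    r • qGenFun q f = qGenFun q fun n => r * f n := by
  ext n
  simp

variable {q : K}

lemma qGenFun_injective (hq : ∀ n : ℕ, 1 ≤ n → qInt q n ≠ 0) :
    Function.Injective (qGenFun q : (ℕ → R) → PowerSeries R) := by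
  intro f g hfg
  ext n
  have hn := congrArg (PowerSeries.coeff n) hfg
  rw [coeff_qGenFun, coeff_qGenFun] at hn
  exact (IsUnit.mk0 _ (inv_ne_zero (qFact_ne_zero hq n))).smul_left_cancel.1 hn

lemma qGenFun_mul_qGenFun (hq : ∀ n : ℕ, 1 ≤ n → qInt q n ≠ 0) (f g : ℕ → R) :
    qGenFun q f * qGenFun q g =
      qGenFun q fun n => ∑ k ∈ range (n + 1), qChoose q n k • (f k * g (n - k)) := by
  ext n
  simp only [PowerSeries.coeff_mul, coeff_qGenFun, Nat.sum_antidiagonal_eq_sum_range_succ_mk,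
    smul_sum, smul_smul, inv_qFact_mul_qChoose hq, smul_mul_smul_comm, Nat.succ_eq_add_one]

lemma X_mul_qGenFun (hq : ∀ n : ℕ, 1 ≤ n → qInt q n ≠ 0) (f : ℕ → R) :
    PowerSeries.X * qGenFun q f = qGenFun q fun n => qInt q n • f (n - 1) := by
  ext n
  cases n with
  | zero => simp [qInt_zero]
  | succ n =>
    rw [PowerSeries.coeff_succ_X_mul, coeff_qGenFun, coeff_qGenFun, smul_smul, mul_comm,
      qInt_mul_inv_qFact_succ hq, Nat.add_sub_cancel]

/-- The first `q`-exponential `e_q(zt) = ∑ z ^ n t ^ n / [n]_q!`. -/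
def qExp (q : K) (z : R) : PowerSeries R :=
  qGenFun q fun n => z ^ n

/-- The second `q`-exponential `E_q(zt) = ∑ q ^ (n (n - 1) / 2) z ^ n t ^ n / [n]_q!`. -/
def qExpDual (q : K) (z : R) : PowerSeries R :=
  qGenFun q fun n => q ^ (n * (n - 1) / 2) • z ^ n

lemma qExp_smul (q : K) (z : R) : qExp q (q • z) = qDilation q (qExp q z) := by
  simp only [qExp, qDilation_qGenFun, smul_pow]

lemma qEuler_qExp (hq : ∀ n : ℕ, 1 ≤ n → qInt q n ≠ 0) (z : R) :
    qEuler q (qExp q z) = z • (PowerSeries.X * qExp q z) := by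
  rw [qExp, qEuler_qGenFun, X_mul_qGenFun hq, smul_qGenFun]
  congr 1 with n
  cases n with
  | zero => simp [qInt_zero]
  | succ n => rw [Nat.add_sub_cancel, pow_succ', mul_smul_comm]

lemma qEuler_qExp_one (hq : ∀ n : ℕ, 1 ≤ n → qInt q n ≠ 0) :
    qEuler q (qExp q (1 : R)) = PowerSeries.X * qExp q 1 := by
  rw [qEuler_qExp hq, one_smul]

lemma qEuler_qExpDual (hq : ∀ n : ℕ, 1 ≤ n → qInt q n ≠ 0) (z : R) :
    qEuler q (qExpDual q z) = z • (PowerSeries.X * qDilation q (qExpDual q z)) := by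
  rw [qExpDual, qEuler_qGenFun, qDilation_qGenFun, X_mul_qGenFun hq, smul_qGenFun]
  congr 1 with n
  cases n with
  | zero => simp [qInt_zero]
  | succ n =>
    rw [Nat.triangle_succ, Nat.add_sub_cancel, pow_add]
    algebra

end QCalculus

section Appell

variable {K R : Type*} [Field K] [CommRing R] [Algebra K R] {q : K}

lemma aeval_monomial_single_add_single (z : Fin 2 → R) (j k : ℕ) (c : K) :
    aeval z (monomial (Finsupp.single 0 j + Finsupp.single 1 k) c) =
      algebraMap K R c * (z 0 ^ j * z 1 ^ k) := by
  rw [aeval_monomial, Finsupp.prod_add_index' (by simp) (by simp [pow_add]),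
    Finsupp.prod_single_index (by simp), Finsupp.prod_single_index (by simp)]

lemma qGenFun_aeval_appell (hq : ∀ n : ℕ, 1 ≤ n → qInt q n ≠ 0) (a : ℕ → K) (z : Fin 2 → R) :
    qGenFun q (fun n => aeval z (appell q a n)) =
      PowerSeries.map (algebraMap K R) (qGenFun q a) * (qExp q (z 0) * qExpDual q (z 1)) := by
  rw [map_qGenFun, qExp, qExpDual, qGenFun_mul_qGenFun hq, qGenFun_mul_qGenFun hq]
  congr 1 with n
  rw [appell, map_sum]
  refine sum_congr rfl fun i hi => ?_
  rw [map_sum, mul_sum, smul_sum, Nat.sub_add_comm (mem_range_succ_iff.1 hi)]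
  refine sum_congr rfl fun j _ => ?_
  rw [aeval_monomial_single_add_single, ← qChoose_mul_qChoose hq]
  algebra

lemma qGenFun_appell (hq : ∀ n : ℕ, 1 ≤ n → qInt q n ≠ 0) (a : ℕ → K) :
    qGenFun q (appell q a) =
      PowerSeries.map (algebraMap K _) (qGenFun q a) * (qExp q (X 0) * qExpDual q (X 1)) := by
  simpa using qGenFun_aeval_appell (R := MvPolynomial (Fin 2) K) hq a X

lemma qGenFun_substX_appell (hq : ∀ n : ℕ, 1 ≤ n → qInt q n ≠ 0) (a : ℕ → K) :
    qGenFun q (fun n => substX q (appell q a n)) =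
      PowerSeries.map (algebraMap K _) (qGenFun q a) *
        (qDilation q (qExp q (X 0)) * qExpDual q (X 1)) := by
  rw [← qExp_smul, ← C_mul']
  exact qGenFun_aeval_appell hq a fun i : Fin 2 => if i = 0 then C q * X 0 else X 1

lemma qEuler_mul_qDilation_qExp_mul_qExpDual (hq : ∀ n : ℕ, 1 ≤ n → qInt q n ≠ 0)
    {A S T : PowerSeries R} (hS : qEuler q A = S * qDilation q A) (hT : A = T * qDilation q A)
    (x y : R) :
    qEuler q (A * (qDilation q (qExp q x) * qExpDual q y)) =
      (S + y • (PowerSeries.X * T) + (q • x) • PowerSeries.X) *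
        qDilation q (A * (qExp q x * qExpDual q y)) := by
  have hE : qEuler q (A * qExpDual q y) =
      (S + y • (PowerSeries.X * T)) * qDilation q (A * qExpDual q y) := by
    rw [mul_comm A, qEuler_mul, qEuler_qExpDual hq, hS, map_mul]
    linear_combination (norm := algebra)
      (y • (PowerSeries.X * qDilation q (qExpDual q y))) * hT
  rw [← mul_assoc, mul_right_comm, qEuler_mul, hE, ← qExp_smul, qEuler_qExp hq, qExp_smul]
  simp only [map_mul]
  algebra

lemma map_qGenFun_add_smul_X_mul (hq : ∀ n : ℕ, 1 ≤ n → qInt q n ≠ 0) (α β : ℕ → K) (y : R) :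
    PowerSeries.map (algebraMap K R) (qGenFun q α) +
        y • (PowerSeries.X * PowerSeries.map (algebraMap K R) (qGenFun q β)) =
      qGenFun q fun k =>
        algebraMap K R (α k) + algebraMap K R (qInt q k * β (k - 1)) * y := by
  rw [map_qGenFun, map_qGenFun, X_mul_qGenFun hq, smul_qGenFun, ← qGenFun_add]
  congr 1 with k
  rw [Algebra.smul_def, map_mul, mul_comm y]

theorem appell_recurrence (hq : ∀ n : ℕ, 1 ≤ n → qInt q n ≠ 0) {a α β : ℕ → K}
    (hα : qEuler q (qGenFun q a) = qGenFun q α * qDilation q (qGenFun q a))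
    (hβ : qGenFun q a = qGenFun q β * qDilation q (qGenFun q a)) (n : ℕ) :
    C (qInt q n) * substX q (appell q a n) =
      (∑ k ∈ range (n + 1), C (qChoose q n k * q ^ (n - k)) *
        (C (α k) + C (qInt q k * β (k - 1)) * X 1) * appell q a (n - k)) +
      C (qInt q n * q ^ n) * X 0 * appell q a (n - 1) := by
  have hS := congrArg (PowerSeries.map (algebraMap K (MvPolynomial (Fin 2) K))) hα
  have hT := congrArg (PowerSeries.map (algebraMap K (MvPolynomial (Fin 2) K))) hβ
  rw [map_qEuler, map_mul, map_qDilation] at hS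
  rw [map_mul, map_qDilation] at hT
  have euler := qEuler_mul_qDilation_qExp_mul_qExpDual hq hS hT (X 0) (X 1)
  rw [← qGenFun_substX_appell hq, ← qGenFun_appell hq, map_qGenFun_add_smul_X_mul hq, add_mul,
    smul_mul_assoc, qEuler_qGenFun, qDilation_qGenFun, qGenFun_mul_qGenFun hq, X_mul_qGenFun hq,
    smul_qGenFun, ← qGenFun_add] at euler
  have coeff_n := congrFun (qGenFun_injective hq euler) n
  simp only [MvPolynomial.algebraMap_eq] at coeff_n
  rw [C_mul', coeff_n]
  congr 1
  · refine sum_congr rfl fun k _ => ?_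
    simp only [smul_eq_C_mul, C_mul]
    ring
  · cases n with
    | zero => simp [qInt_zero]
    | succ n =>
      simp only [smul_eq_C_mul, C_mul, C_pow, Nat.add_sub_cancel]
      ring

end Appell

section Bernoulli

variable {K R : Type*} [Field K] [CommRing R] [Algebra K R] {q : K}

lemma smul_qEuler_of_mul_sub_one_eq_X {A E : PowerSeries R}
    (hA : A * (E - 1) = PowerSeries.X) (hE : qEuler q E = PowerSeries.X * E) :
    q • qEuler q A = (1 - A * E) * qDilation q A := by
  have euler : PowerSeries.X * E * A + qDilation q (E - 1) * qEuler q A = PowerSeries.X := by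
    rw [← hE, ← sub_zero (qEuler q E), ← qEuler_one q, ← map_sub, ← qEuler_mul, mul_comm, hA,
      qEuler_X]
  have dilation : qDilation q A * qDilation q (E - 1) = q • PowerSeries.X := by
    rw [← map_mul, hA, PowerSeries.rescale_X, ← PowerSeries.smul_eq_C_mul, algebraMap_smul]
  apply PowerSeries.X_mul_cancel
  linear_combination (norm := algebra) qDilation q A * euler - qEuler q A * dilation

lemma smul_eq_mul_qDilation_of_mul_sub_one_eq_X {A E : PowerSeries R}
    (hA : A * (E - 1) = PowerSeries.X) (hE : qEuler q E = PowerSeries.X * E) :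
    q • A = (1 + (q - 1) • (A * E)) * qDilation q A := by
  have euler := smul_qEuler_of_mul_sub_one_eq_X hA hE
  have dilation := qDilation_eq_add_qEuler q A
  linear_combination (norm := algebra) (-q) • dilation - (q - 1) • euler

lemma qGenFun_mul_qExp_one (hq : ∀ n : ℕ, 1 ≤ n → qInt q n ≠ 0) (b : ℕ → K) :
    qGenFun q b * qExp q 1 = qGenFun q fun n => ∑ j ∈ range (n + 1), qChoose q n j * b j := by
  simp only [qExp, qGenFun_mul_qGenFun hq, one_pow, mul_one, smul_eq_mul]

lemma qGenFun_qBernoulli_mul_qExp_one_sub_one (hq : ∀ n : ℕ, 1 ≤ n → qInt q n ≠ 0) {b : ℕ → K}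
    (hb0 : b 0 = 1) (hb : ∀ n : ℕ, 2 ≤ n → ∑ k ∈ range n, qChoose q n k * b k = 0) :
    qGenFun q b * (qExp q 1 - 1) = PowerSeries.X := by
  rw [mul_sub, mul_one, qGenFun_mul_qExp_one hq]
  ext n
  rw [map_sub, coeff_qGenFun, coeff_qGenFun, ← smul_sub, sum_range_succ, qChoose_self hq, one_mul,
    add_sub_cancel_right]
  match n with
  | 0 => simp
  | 1 => simp [hb0, qChoose, qFact, qInt_one]
  | n + 2 => simp [hb (n + 2), PowerSeries.coeff_X]

lemma qEuler_qGenFun_qBernoulli (hq0 : q ≠ 0) (hq : ∀ n : ℕ, 1 ≤ n → qInt q n ≠ 0) {b α : ℕ → K}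
    (hb0 : b 0 = 1) (hb : ∀ n : ℕ, 2 ≤ n → ∑ k ∈ range n, qChoose q n k * b k = 0)
    (hα0 : α 0 = 0)
    (hα : ∀ k : ℕ, 1 ≤ k → α k = -(1 / q) * ∑ j ∈ range (k + 1), qChoose q k j * b j) :
    qEuler q (qGenFun q b) = qGenFun q α * qDilation q (qGenFun q b) := by
  have hA := qGenFun_qBernoulli_mul_qExp_one_sub_one hq hb0 hb
  have series : q • qGenFun q α = 1 - qGenFun q b * qExp q 1 := by
    rw [qGenFun_mul_qExp_one hq]
    ext n
    cases n with
    | zero => simp [hα0, hb0, qChoose_self hq]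
    | succ n =>
      simp only [map_sub, PowerSeries.coeff_smul, coeff_qGenFun, PowerSeries.coeff_one,
        hα _ n.succ_pos, smul_eq_mul, n.succ_ne_zero, if_false]
      field_simp
      ring
  have euler := smul_qEuler_of_mul_sub_one_eq_X hA (qEuler_qExp_one hq)
  rw [← series, smul_mul_assoc] at euler
  exact smul_right_injective _ hq0 euler

lemma qGenFun_qBernoulli_eq_mul_qDilation (hq0 : q ≠ 0)
    (hq : ∀ n : ℕ, 1 ≤ n → qInt q n ≠ 0) {b β : ℕ → K}
    (hb0 : b 0 = 1) (hb : ∀ n : ℕ, 2 ≤ n → ∑ k ∈ range n, qChoose q n k * b k = 0)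
    (hβ0 : β 0 = 1)
    (hβ : ∀ m : ℕ, 1 ≤ m → β m = ((q - 1) / q) * ∑ j ∈ range (m + 1), qChoose q m j * b j) :
    qGenFun q b = qGenFun q β * qDilation q (qGenFun q b) := by
  have hA := qGenFun_qBernoulli_mul_qExp_one_sub_one hq hb0 hb
  have series : q • qGenFun q β = 1 + (q - 1) • (qGenFun q b * qExp q 1) := by
    rw [qGenFun_mul_qExp_one hq]
    ext n
    cases n with
    | zero => simp [hβ0, hb0, qFact_zero, qChoose_self hq]
    | succ n =>
      simp only [map_add, PowerSeries.coeff_smul, coeff_qGenFun, PowerSeries.coeff_one,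
        hβ _ n.succ_pos, smul_eq_mul, n.succ_ne_zero, if_false, zero_add]
      field_simp
  have dilation := smul_eq_mul_qDilation_of_mul_sub_one_eq_X hA (qEuler_qExp_one hq)
  rw [← series, smul_mul_assoc] at dilation
  exact smul_right_injective _ hq0 dilation

end Bernoulli

theorem qBernoulli2D_recurrence_general
    {K : Type*} [Field K] {q : K} (hq0 : q ≠ 0) (hq : ∀ n : ℕ, 1 ≤ n → qInt q n ≠ 0)
    {b : ℕ → K} (hb0 : b 0 = 1)
    (hb : ∀ n : ℕ, 2 ≤ n → ∑ k ∈ range n, qChoose q n k * b k = 0)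
    {αB βB : ℕ → K}
    (hαB : ∀ k : ℕ, 1 ≤ k → αB k = -(1 / q) * ∑ j ∈ range (k + 1), qChoose q k j * b j)
    (hβB0 : βB 0 = 1)
    (hβB : ∀ m : ℕ, 1 ≤ m → βB m = ((q - 1) / q) * ∑ j ∈ range (m + 1), qChoose q m j * b j)
    (n : ℕ) :
    C (qInt q n) * substX q (appell q b n) =
      (∑ k ∈ Icc 1 n, C (qChoose q n k * q ^ (n - k)) *
        (C (αB k) + C (qInt q k * βB (k - 1)) * X 1) * appell q b (n - k)) +
      C (qInt q n * q ^ n) * X 0 * appell q b (n - 1) := by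
  -- `αB 0` is arbitrary, whereas the relation `θ A = α(t) A(qt)` forces `α 0 = 0`.
  have update_succ (k : ℕ) (hk : 1 ≤ k) : Function.update αB 0 0 k = αB k :=
    Function.update_of_ne (Nat.one_le_iff_ne_zero.1 hk) _ _
  have hα := qEuler_qGenFun_qBernoulli hq0 hq hb0 hb (Function.update_self 0 0 αB)
    fun k hk => (update_succ k hk).trans (hαB k hk)
  have hβ := qGenFun_qBernoulli_eq_mul_qDilation hq0 hq hb0 hb hβB0 hβB
  rw [appell_recurrence hq hα hβ, range_eq_Ico, sum_eq_sum_Ico_succ_bot n.succ_pos]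
  have term_zero : C (Function.update αB 0 0 0) + C (qInt q 0 * βB (0 - 1)) * X 1 =
      (0 : MvPolynomial (Fin 2) K) := by
    simp [qInt_zero]
  rw [term_zero, mul_zero, zero_mul, zero_add]
  congr 1
  refine sum_congr rfl fun k hk => ?_
  rw [update_succ k (mem_Icc.1 hk).1]

/-- Recurrence relation for 2D `q`-Bernoulli polynomials. -/
theorem qBernoulli2D_recurrence
    {K : Type*} [Field K] [CharZero K] (q : K) (hq0 : q ≠ 0) (hq1 : q ≠ 1)
    (hq : ∀ n : ℕ, 1 ≤ n → qInt q n ≠ 0)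
    (b : ℕ → K) (hb0 : b 0 = 1)
    (hb : ∀ n : ℕ, 2 ≤ n → ∑ k ∈ Finset.range n, qChoose q n k * b k = 0)
    (αB βB : ℕ → K)
    (hαB : ∀ k : ℕ, 1 ≤ k → αB k = -(1 / q) * ∑ j ∈ Finset.range (k + 1), qChoose q k j * b j)
    (hβB0 : βB 0 = 1)
    (hβB : ∀ m : ℕ, 1 ≤ m →
      βB m = ((q - 1) / q) * ∑ j ∈ Finset.range (m + 1), qChoose q m j * b j)
    (n : ℕ) (hn : 1 ≤ n) :
    C (qInt q n) * substX q (appell q b n) =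
      (∑ k ∈ Finset.Icc 1 n, C (qChoose q n k * q ^ (n - k)) *
        (C (αB k) + C (qInt q k * βB (k - 1)) * X 1) * appell q b (n - k)) +
      C (qInt q n * q ^ n) * X 0 * appell q b (n - 1) :=
  qBernoulli2D_recurrence_general hq0 hq hb0 hb hαB hβB0 hβB n
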